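/- Fix an integer d ≥ 3. For every z ∈ ℂ with Im z > 0, the Stieltjes transform of the Kesten–McKay distribution equals the explicit algebraic expression: ∫_{-2}^{2} ρ_d(x)/(x - z) dx = (d-1)·(-(d-2)z + d√(z²-4)) / (2(d² - (d-1)z²)), where the branch of √(z²-4) is chosen with Im √(z²-4) > 0. -/

import Mathlib

/-- The Kesten–McKay density for a `d`-regular graph (normalized adjacency matrix). -/
noncomputable def kestenMcKay (d : ℕ) (x : ℝ) : ℝ :=
  if x ∈ Set.Icc (-2 : ℝ) 2 then
    (1 + 1 / ((d : ℝ) - 1) - x ^ 2 / (d : ℝ))⁻¹ * Real.sqrt (4 - x ^ 2) / (2 * Real.pi)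
  else 0

open Complex in
lemma km_den_ne (m : ℂ) (hm : ‖m‖ < 1) (u : ℂ) (hu : ‖u‖ ≤ 1) : 1 - m * u ≠ 0 := by
  intro h
  have h1 : m * u = 1 := by linear_combination -h
  have h2 : ‖m‖ * ‖u‖ = 1 := by rw [← norm_mul, h1, norm_one]
  nlinarith [norm_nonneg m, norm_nonneg u]

open Complex in
lemma km_avg (m : ℂ) (hm : ‖m‖ < 1) :
    ∫ θ in (0:ℝ)..2 * Real.pi, (exp (θ * I) - m) / (1 - m * exp (θ * I)) = -2 * Real.pi * m := by
  have h : DiffContOnCl ℂ (fun u : ℂ => (u - m) / (1 - m * u)) (Metric.ball 0 |1|) := by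
    apply DifferentiableOn.diffContOnCl
    intro u hu
    have hu' : ‖u‖ ≤ 1 := by
      have := Metric.closure_ball_subset_closedBall hu
      simpa using this
    have := km_den_ne m hm u hu'
    apply DifferentiableAt.differentiableWithinAt
    fun_prop (disch := assumption)
  have h2 := h.circleAverage
  rw [Real.circleAverage_def] at h2
  simp only [circleMap, ofReal_one, one_mul, zero_add, zero_sub, mul_zero, sub_zero, div_one,
    real_smul] at h2
  have hp : (Real.pi : ℂ) ≠ 0 := by exact_mod_cast Real.pi_ne_zero
  push_cast at h2
  rw [inv_mul_eq_iff_eq_mul₀ (by simp [hp])] at h2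
  rw [h2]; ring

open Complex in
lemma km_expneg : ∫ θ in (0:ℝ)..2 * Real.pi, exp (-I * θ) = 0 := by
  rw [integral_exp_mul_complex (by simp)]
  have : exp (-I * ((2 * Real.pi : ℝ) : ℂ)) = 1 := by
    rw [exp_eq_one_iff]; exact ⟨-1, by push_cast; ring⟩
  rw [this]; simp

open Complex in
lemma km_alg1 (m u v S : ℂ) (h0 : m ≠ 0) (hu : 1 - m * u ≠ 0) (hv : 1 - m * v ≠ 0)
    (hS : S = (u - v) / (2 * I)) :
    S ^ 2 / ((1 - m * u) * (1 - m * v)) =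
      S / (2 * I * m * (1 - m * u)) + -S / (2 * I * m * (1 - m * v)) := by
  have hI : I ≠ 0 := I_ne_zero
  have e : S = ((1 - m * v) - (1 - m * u)) / (2 * I * m) := by
    rw [hS]; field_simp; ring
  rw [e]
  generalize 1 - m * u = A at *
  generalize 1 - m * v = B at *
  field_simp
  ring

open Complex in
lemma km_alg2 (m u : ℂ) (h0 : m ≠ 0) (hu0 : u ≠ 0) (hu : 1 - m * u ≠ 0) :
    (u - u⁻¹) / (2 * I) / (2 * I * m * (1 - m * u)) =
      -(1 / (4 * m)) * ((u - m) / (1 - m * u) - u⁻¹) := by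
  have hI : I ≠ 0 := I_ne_zero
  have e : m = (1 - (1 - m * u)) / u := by field_simp; ring
  have e2 : (u - m) / (1 - m * u) - u⁻¹ = (u - u⁻¹) / (1 - m * u) := by
    rw [div_sub' hu]
    congr 1
    field_simp
    ring
  rw [e2, div_div, show 2 * I * (2 * I * m * (1 - m * u)) = -(4 * m * (1 - m * u)) by
    linear_combination (4 * m * (1 - m * u)) * I_sq]
  generalize 1 - m * u = A at *
  field_simp

open Complex in
lemma km_trig (m : ℂ) (hm : ‖m‖ < 1) (h0 : m ≠ 0) :
    ∫ θ in (0:ℝ)..Real.pi, (Real.sin θ : ℂ) ^ 2 /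
      ((1 - m * exp (θ * I)) * (1 - m * exp (-θ * I))) = (Real.pi : ℂ) / 2 := by
  have hn : ∀ θ : ℝ, 1 - m * exp (θ * I) ≠ 0 := fun θ => 
    km_den_ne m hm _ (by rw [norm_exp_ofReal_mul_I])
  have hn' : ∀ θ : ℝ, 1 - m * exp (-θ * I) ≠ 0 := fun θ => by simpa using hn (-θ)
  have hI : I ≠ 0 := I_ne_zero
  set g : ℝ → ℂ := fun θ => (Real.sin θ : ℂ) / (2 * I * m * (1 - m * exp (θ * I))) with hg
  have hgc : Continuous g := by
    apply Continuous.div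
    · fun_prop
    · fun_prop
    · intro θ
      have := hn θ
      simp [this, h0]
  have h1 : ∀ θ : ℝ, (Real.sin θ : ℂ) ^ 2 /
      ((1 - m * exp (θ * I)) * (1 - m * exp (-θ * I))) = g θ + g (-θ) := by
    intro θ
    have a := hn θ
    have b := hn' θ
    have e : (Real.sin θ : ℂ) = (exp (θ * I) - exp (-θ * I)) / (2 * I) := by
      rw [ofReal_sin, sin]; field_simp; rw [I_sq]; ring
    simp only [hg, ofReal_neg, Real.sin_neg]
    exact km_alg1 m _ _ _ h0 a b e
  have h2 : g.Periodic (2 * Real.pi) := by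
    intro θ
    have : exp (((θ + 2 * Real.pi : ℝ) : ℂ) * I) = exp (θ * I) := by
      rw [exp_eq_exp_iff_exists_int]; exact ⟨1, by push_cast; ring⟩
    simp only [hg, Real.sin_add_two_pi, this]
  have h3 : ∀ θ : ℝ, g θ = -(1 / (4 * m)) * ((exp (θ * I) - m) / (1 - m * exp (θ * I)) 
      - exp (-I * θ)) := by
    intro θ
    have a := hn θ
    have e0 : exp (θ * I) ≠ 0 := exp_ne_zero _
    have e1 : exp (-I * θ) = (exp (θ * I))⁻¹ := by rw [← exp_neg]; congr 1; ring
    have e : (Real.sin θ : ℂ) = (exp (θ * I) - (exp (θ * I))⁻¹) / (2 * I) := by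
      rw [← exp_neg, ofReal_sin, sin, neg_mul]; field_simp; rw [I_sq]; ring
    simp only [hg, e, e1]
    exact km_alg2 m _ h0 e0 a
  have h4 : ∫ θ in (0:ℝ)..2 * Real.pi, g θ = Real.pi / 2 := by
    simp_rw [h3]
    rw [intervalIntegral.integral_const_mul, intervalIntegral.integral_sub, km_avg m hm, km_expneg]
    · field_simp; ring
    · apply Continuous.intervalIntegrable
      exact Continuous.div (by fun_prop) (by fun_prop) hn
    · apply Continuous.intervalIntegrable
      fun_prop
  simp_rw [h1]
  rw [intervalIntegral.integral_add (hgc.intervalIntegrable _ _)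
    (Continuous.intervalIntegrable (u := fun θ => g (-θ)) (hgc.comp continuous_neg) _ _), intervalIntegral.integral_comp_neg,
    add_comm, neg_zero, intervalIntegral.integral_add_adjacent_intervals
      (hgc.intervalIntegrable _ _) (hgc.intervalIntegrable _ _), ← h4]
  have := h2.intervalIntegral_add_eq (-Real.pi) 0
  rw [zero_add] at this
  rw [← this]
  congr 1; ring

open Complex in
lemma km_fac (m : ℂ) (h0 : m ≠ 0) (θ : ℝ) :
    ((2 * Real.cos θ : ℝ) : ℂ) - (m + m⁻¹) =
      -m⁻¹ * ((1 - m * exp (θ * I)) * (1 - m * exp (-θ * I))) := by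
  have e : exp (θ * I) * exp (-θ * I) = 1 := by rw [← exp_add]; simp
  push_cast
  rw [two_cos]
  generalize exp (θ * I) = u at *
  generalize exp (-θ * I) = v at *
  field_simp
  linear_combination m ^ 2 * e

open Complex in
lemma km_w_ne (m : ℂ) (hm : ‖m‖ < 1) (h0 : m ≠ 0) (x : ℝ) (hx : x ∈ Set.Icc (-2 : ℝ) 2) :
    (x : ℂ) - (m + m⁻¹) ≠ 0 := by
  have hc : x = 2 * Real.cos (Real.arccos (x / 2)) := by
    rw [Real.cos_arccos (by linarith [hx.1]) (by linarith [hx.2])]; ring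
  rw [hc, km_fac m h0]
  have h1 := km_den_ne m hm (exp (Real.arccos (x / 2) * I)) (by rw [norm_exp_ofReal_mul_I])
  have h2 := km_den_ne m hm (exp (-Real.arccos (x / 2) * I))
    (by rw [← ofReal_neg, norm_exp_ofReal_mul_I])
  exact mul_ne_zero (neg_ne_zero.mpr (inv_ne_zero h0)) (mul_ne_zero h1 h2)

open Complex in
lemma km_cont (m : ℂ) (hm : ‖m‖ < 1) (h0 : m ≠ 0) :
    ContinuousOn (fun x : ℝ => (Real.sqrt (4 - x ^ 2) : ℂ) / ((x : ℂ) - (m + m⁻¹)))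
      (Set.Icc (-2 : ℝ) 2) := by
  apply ContinuousOn.div
  · exact (continuous_ofReal.comp (by fun_prop)).continuousOn
  · fun_prop
  · exact fun x hx => km_w_ne m hm h0 x hx

open Complex in
lemma km_sc (m : ℂ) (hm : ‖m‖ < 1) (h0 : m ≠ 0) :
    ∫ x in (-2 : ℝ)..2, (Real.sqrt (4 - x ^ 2) : ℂ) / ((x : ℂ) - (m + m⁻¹)) =
      -2 * Real.pi * m := by
  have key := intervalIntegral.integral_deriv_smul_comp' (a := 0) (b := Real.pi)
    (f := fun θ => 2 * Real.cos θ) (f' := fun θ => 2 * -Real.sin θ)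
    (g := fun x : ℝ => (Real.sqrt (4 - x ^ 2) : ℂ) / ((x : ℂ) - (m + m⁻¹)))
    (fun x _ => (Real.hasDerivAt_cos x).const_mul 2) (by fun_prop)
    ((km_cont m hm h0).mono (by
      rintro _ ⟨θ, _, rfl⟩
      exact ⟨by linarith [Real.neg_one_le_cos θ], by linarith [Real.cos_le_one θ]⟩))
  simp only [Real.cos_zero, Real.cos_pi, mul_one, mul_neg] at key
  rw [intervalIntegral.integral_symm, ← key]
  have h : ∀ θ ∈ Set.uIcc 0 Real.pi, (-(2 * Real.sin θ)) •
      ((fun x : ℝ => (Real.sqrt (4 - x ^ 2) : ℂ) / ((x : ℂ) - (m + m⁻¹))) ∘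
        fun θ => 2 * Real.cos θ) θ = (4 * m) * ((Real.sin θ : ℂ) ^ 2 /
      ((1 - m * exp (θ * I)) * (1 - m * exp (-θ * I)))) := by
    intro θ hθ
    rw [Set.uIcc_of_le Real.pi_pos.le] at hθ
    have hs : Real.sqrt (4 - (2 * Real.cos θ) ^ 2) = 2 * Real.sin θ := by
      rw [show 4 - (2 * Real.cos θ) ^ 2 = (2 * Real.sin θ) ^ 2 by
        nlinarith [Real.sin_sq_add_cos_sq θ]]
      exact Real.sqrt_sq (by linarith [Real.sin_nonneg_of_mem_Icc hθ])
    simp only [Function.comp, real_smul, hs, km_fac m h0]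
    generalize (1 - m * exp (θ * I)) * (1 - m * exp (-θ * I)) = A
    rw [neg_mul, div_neg]
    by_cases hA : A = 0
    · simp [hA]
    push_cast
    field_simp
    ring
  rw [intervalIntegral.integral_congr h, intervalIntegral.integral_const_mul, km_trig m hm h0]
  ring

open Complex in
lemma km_m (z s : ℂ) (hz : 0 < z.im) (hs : s ^ 2 = z ^ 2 - 4) (hsim : 0 < s.im) :
    ∃ m : ℂ, ‖m‖ < 1 ∧ m ≠ 0 ∧ z = m + m⁻¹ ∧ s = z - 2 * m := by
  have hp : (z - s) / 2 * ((z + s) / 2) = 1 := by linear_combination -hs / 4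
  have h0 : (z - s) / 2 ≠ 0 := left_ne_zero_of_mul_eq_one hp
  have hi : ((z - s) / 2)⁻¹ = (z + s) / 2 := inv_eq_of_mul_eq_one_right hp
  have hi' := hi
  refine ⟨(z - s) / 2, ?_, h0, by rw [hi]; ring, by ring⟩
  generalize hM : (z - s) / 2 = m at *
  have hzm : z = m + m⁻¹ := by rw [hi, ← hM]; ring
  have hsm : s = m⁻¹ - m := by rw [hi, ← hM]; ring
  rw [hzm] at hz
  rw [hsm] at hsim
  simp only [add_im, sub_im, inv_im] at hz hsim
  have hN : 0 < normSq m := normSq_pos.mpr h0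
  have h1 : 0 < -m.im / normSq m := by linarith
  have h2 : m.im < 0 := by
    by_contra h
    have : -m.im / normSq m ≤ 0 := div_nonpos_of_nonpos_of_nonneg (by linarith) hN.le
    linarith
  have h3 : normSq m < 1 := by
    have e : -m.im / normSq m * normSq m = -m.im := by field_simp
    nlinarith
  rw [normSq_eq_norm_sq] at h3
  nlinarith [norm_nonneg m]

/-- For `d ≥ 3` and `z` in the upper half-plane, the Stieltjes transform of the
Kesten–McKay distribution is given by the explicit algebraic expression
`(d-1)(-(d-2)z + d√(z²-4)) / (2(d² - (d-1)z²))`, where `s = √(z²-4)` is the branch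
with `Im s > 0`. -/
theorem kestenMcKay_stieltjes_transform (d : ℕ) (hd : 3 ≤ d) (z s : ℂ)
    (hz : 0 < z.im) (hs : s ^ 2 = z ^ 2 - 4) (hsim : 0 < s.im) :
    ∫ x in (-2 : ℝ)..2, (kestenMcKay d x : ℂ) / ((x : ℂ) - z) =
      ((d : ℂ) - 1) * (-((d : ℂ) - 2) * z + (d : ℂ) * s) /
        (2 * ((d : ℂ) ^ 2 - ((d : ℂ) - 1) * z ^ 2)) := by
  obtain ⟨m, hm, hm0, hzm, hsm⟩ := km_m z s hz hs hsim
  have hdR : (3 : ℝ) ≤ d := by exact_mod_cast hd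
  obtain ⟨r, hr, hr2⟩ : ∃ r : ℝ, 1 < r ∧ r ^ 2 = d - 1 :=
    ⟨Real.sqrt (d - 1), by rw [Real.lt_sqrt] <;> linarith, Real.sq_sqrt (by linarith)⟩
  have hdr : (d : ℝ) = r ^ 2 + 1 := by linarith
  have hdc : (d : ℂ) = (r : ℂ) ^ 2 + 1 := by exact_mod_cast hdr
  have hr0 : (r : ℂ) ≠ 0 := by exact_mod_cast (by linarith : r ≠ 0)
  have hd0 : (r : ℂ) ^ 2 + 1 ≠ 0 := by exact_mod_cast (by positivity : r ^ 2 + 1 ≠ 0)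
  have hq0 : (r : ℂ)⁻¹ ≠ 0 := inv_ne_zero hr0
  have hq : ‖(r : ℂ)⁻¹‖ < 1 := by
    rw [norm_inv, Complex.norm_real, Real.norm_of_nonneg (by linarith)]
    exact inv_lt_one_of_one_lt₀ hr
  have hq0' : -(r : ℂ)⁻¹ ≠ 0 := neg_ne_zero.mpr hq0
  have hq' : ‖-(r : ℂ)⁻¹‖ < 1 := by rwa [norm_neg]
  obtain ⟨a, ha⟩ : ∃ a : ℂ, a = (r : ℂ)⁻¹ + (r : ℂ)⁻¹⁻¹ := ⟨_, rfl⟩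
  have ha' : a = ((r : ℂ) ^ 2 + 1) / r := by rw [ha]; field_simp; ring
  have ha0 : a ≠ 0 := by rw [ha']; exact div_ne_zero hd0 hr0
  have haim : a.im = 0 := by
    rw [ha', show ((r : ℂ) ^ 2 + 1) / r = (((r ^ 2 + 1) / r : ℝ) : ℂ) by push_cast; rfl, Complex.ofReal_im]
  have hna : -(r : ℂ)⁻¹ + (-(r : ℂ)⁻¹)⁻¹ = -a := by rw [ha, inv_neg]; ring
  have haz : a - z ≠ 0 := fun h => by
    have := congrArg Complex.im h
    simp [haim] at this; linarith
  have haz' : a + z ≠ 0 := fun h => by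
    have := congrArg Complex.im h
    simp [haim] at this; linarith
  have hpi : (Real.pi : ℂ) ≠ 0 := by exact_mod_cast Real.pi_ne_zero
  have c1 := km_cont m hm hm0
  have c2 := km_cont _ hq hq0
  have c3 := km_cont _ hq' hq0'
  have i1 := km_sc m hm hm0
  have i2 := km_sc _ hq hq0
  have i3 := km_sc _ hq' hq0'
  have n1 := km_w_ne m hm hm0
  have n2 := km_w_ne _ hq hq0
  have n3 := km_w_ne _ hq' hq0'
  rw [← hzm] at c1 i1 n1
  rw [← ha] at c2 i2 n2
  rw [hna] at c3 i3 n3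
  have I1 := c1.intervalIntegrable_of_Icc (μ := MeasureTheory.volume) (by norm_num)
  have I2 := c2.intervalIntegrable_of_Icc (μ := MeasureTheory.volume) (by norm_num)
  have I3 := c3.intervalIntegrable_of_Icc (μ := MeasureTheory.volume) (by norm_num)
  have hcongr : ∀ x ∈ Set.uIcc (-2 : ℝ) 2, (kestenMcKay d x : ℂ) / ((x : ℂ) - z) =
      ((r : ℂ) ^ 2 + 1) / (2 * Real.pi * ((a - z) * (a + z))) *
        ((Real.sqrt (4 - x ^ 2) : ℂ) / ((x : ℂ) - z)
          - ((a + z) / (2 * a)) * ((Real.sqrt (4 - x ^ 2) : ℂ) / ((x : ℂ) - a))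
          - ((a - z) / (2 * a)) * ((Real.sqrt (4 - x ^ 2) : ℂ) / ((x : ℂ) - -a))) := by
    intro x hx
    rw [Set.uIcc_of_le (by norm_num)] at hx
    have e1 := n1 x hx
    have e2 := n2 x hx
    have e3 := n3 x hx
    rw [kestenMcKay, if_pos hx]
    push_cast
    generalize (Real.sqrt (4 - x ^ 2) : ℂ) = R
    have hden : (1 + 1 / ((d : ℂ) - 1) - (x : ℂ) ^ 2 / d) =
        -(((x : ℂ) - a) * ((x : ℂ) - -a)) / ((r : ℂ) ^ 2 + 1) := by
      rw [ha', hdc, add_sub_cancel_right]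
      field_simp
      ring
    rw [hden]
    have hpf : (((x : ℂ) - a) * ((x : ℂ) - -a))⁻¹ * ((x : ℂ) - z)⁻¹ * -1 =
      ((a - z) * (a + z))⁻¹ * (((x : ℂ) - z)⁻¹ - ((a + z) / (2 * a)) * ((x : ℂ) - a)⁻¹
          - ((a - z) / (2 * a)) * ((x : ℂ) - -a)⁻¹) := by
      rw [sub_neg_eq_add] at e3 ⊢
      field_simp
      ring
    simp only [div_eq_mul_inv, mul_inv, inv_neg, inv_inv] at hpf ⊢
    linear_combination (R * ((r : ℂ) ^ 2 + 1) * 2⁻¹ * (Real.pi : ℂ)⁻¹) * hpf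
  rw [intervalIntegral.integral_congr hcongr, intervalIntegral.integral_const_mul,
    intervalIntegral.integral_sub (I1.sub (I2.const_mul _)) (I3.const_mul _),
    intervalIntegral.integral_sub I1 (I2.const_mul _),
    intervalIntegral.integral_const_mul, intervalIntegral.integral_const_mul, i1, i2, i3]
  have hD : (d : ℂ) ^ 2 - ((d : ℂ) - 1) * z ^ 2 = (r : ℂ) ^ 2 * ((a - z) * (a + z)) := by
    rw [ha', hdc]; field_simp; ring
  rw [hD, hdc, hsm]
  have hra : (r : ℂ) ^ 2 + 1 = a * r := by rw [ha']; field_simp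
  have hra' : (r : ℂ) ^ 2 = a * r - 1 := by linear_combination hra
  generalize hP : (a - z) * (a + z) = P
  have hP0 : P ≠ 0 := by rw [← hP]; exact mul_ne_zero haz haz'
  rw [hra]
  field_simp
  linear_combination (2 * z - 2 * a * m * r) * hra
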